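/- Let R be a Cohen-Macaulay commutative noetherian local ring. Then every prime ideal p of R such that R_p is not a regular local ring contains the ideal ⋂ Ann_R Ext_R^i(K,L), where the intersection ranges over all integers i > 0 and all modules K, L in CM_0(R). Equivalently, the singular locus Sing R is contained in V(⋂_{i>0, K,L ∈ CM_0(R)} Ann_R Ext_R^i(K,L)). -/

import Mathlib

open CategoryTheory IsLocalRing

noncomputable section

/-- The `i`-th Tor module of two `R`-modules, as an object of `ModuleCat R`. -/
def TorMod (R : Type) [CommRing R] (i : ℕ) (M N : ModuleCat.{0} R) : ModuleCat.{0} R :=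
  ((Tor (ModuleCat.{0} R) i).obj M).obj N

/-- The `i`-th Ext module of two `R`-modules, as an object of `ModuleCat R`. -/
def ExtMod (R : Type) [CommRing R] (i : ℕ) (M N : ModuleCat.{0} R) : ModuleCat.{0} R :=
  ((Ext R (ModuleCat.{0} R) i).obj (Opposite.op M)).obj N

/-- Integer-indexed Tor: `Tor_n = 0` for `n < 0`. -/
def TorZ (R : Type) [CommRing R] (n : ℤ) (M N : ModuleCat.{0} R) : ModuleCat.{0} R :=
  if 0 ≤ n then TorMod R n.toNat M N else ModuleCat.of R PUnit

/-- Integer-indexed Ext: `Ext^n = 0` for `n < 0`. -/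
def ExtZ (R : Type) [CommRing R] (n : ℤ) (M N : ModuleCat.{0} R) : ModuleCat.{0} R :=
  if 0 ≤ n then ExtMod R n.toNat M N else ModuleCat.of R PUnit

/-- The depth of a module `N` over a local ring `S`, defined as the infimum of the set of
integers `i` such that `Ext^i(k, N) ≠ 0`, where `k` is the residue field of `S`
(`⊤` if no such `i` exists). -/
def moduleDepth (S : Type) [CommRing S] [IsLocalRing S] (N : Type) [AddCommGroup N]
    [Module S N] : ℕ∞ :=
  sInf {i : ℕ∞ | ∃ j : ℕ, i = (j : ℕ∞) ∧
    Nontrivial (ExtMod S j (ModuleCat.of S (ResidueField S)) (ModuleCat.of S N))}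

/-- A local ring is regular if it is noetherian and its maximal ideal can be generated by
(Krull dimension of `S`)-many elements. -/
def IsRegularLocal (S : Type) [CommRing S] [IsLocalRing S] : Prop :=
  IsNoetherianRing S ∧ ∃ s : Finset S, Ideal.span (s : Set S) = maximalIdeal S ∧
    (s.card : WithBot ℕ∞) = ringKrullDim S

/-- A local ring is Cohen-Macaulay if its depth (as a module over itself) equals its
Krull dimension. -/
def IsCMLocalRing (R : Type) [CommRing R] [IsLocalRing R] : Prop :=
  (moduleDepth R R : WithBot ℕ∞) = ringKrullDim R

/-- A module `M` over a local ring `R` is maximal Cohen-Macaulay if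
`depth M_p ≥ dim R_p` for every prime ideal `p` of `R`. -/
def IsMCMModule (R : Type) [CommRing R] [IsLocalRing R] (M : Type) [AddCommGroup M]
    [Module R M] : Prop :=
  ∀ (p : Ideal R) [p.IsPrime],
    ringKrullDim (Localization.AtPrime p) ≤
      (moduleDepth (Localization.AtPrime p) (LocalizedModule p.primeCompl M) : WithBot ℕ∞)

/-- Membership in `CM(R)`: finitely generated maximal Cohen-Macaulay modules. -/
def MemCM (R : Type) [CommRing R] [IsLocalRing R] (M : ModuleCat.{0} R) : Prop :=
  Module.Finite R M ∧ IsMCMModule R M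

/-- Membership in `CM₀(R)`: finitely generated maximal Cohen-Macaulay modules that are
locally free on the punctured spectrum. -/
def MemCM0 (R : Type) [CommRing R] [IsLocalRing R] (M : ModuleCat.{0} R) : Prop :=
  Module.Finite R M ∧ IsMCMModule R M ∧
    ∀ (p : Ideal R) [p.IsPrime], p ≠ maximalIdeal R →
      Module.Free (Localization.AtPrime p) (LocalizedModule p.primeCompl M)

/-- The singular locus of `R`: primes `p` such that `R_p` is not regular. -/
def singularLocus (R : Type) [CommRing R] : Set (PrimeSpectrum R) :=
  {p | ¬ IsRegularLocal (Localization.AtPrime p.asIdeal)}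

/-- The nonfree locus of a module `M`: primes `p` such that `M_p` is not a free
`R_p`-module. -/
def nonfreeLocus (R : Type) [CommRing R] (M : Type) [AddCommGroup M] [Module R M] :
    Set (PrimeSpectrum R) :=
  {p | ¬ Module.Free (Localization.AtPrime p.asIdeal)
        (LocalizedModule p.asIdeal.primeCompl M)}

/-- `K` is a first syzygy of `N` in a minimal free resolution: there is a surjection
`f : R^n → N` with `ker f ⊆ m·R^n` and `K ≅ ker f`. -/
def IsMinimalSyzygy1 (R : Type) [CommRing R] [IsLocalRing R] (N K : ModuleCat.{0} R) : Prop :=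
  ∃ (n : ℕ) (f : (Fin n → R) →ₗ[R] N), Function.Surjective f ∧
    LinearMap.ker f ≤ (maximalIdeal R) • (⊤ : Submodule R (Fin n → R)) ∧
    Nonempty (K ≃ₗ[R] LinearMap.ker f)

/-- `K` is a `d`-th syzygy of `N` in a minimal free resolution. -/
def IsMinimalSyzygy (R : Type) [CommRing R] [IsLocalRing R] :
    ℕ → ModuleCat.{0} R → ModuleCat.{0} R → Prop
  | 0, N, K => Nonempty ((K : Type) ≃ₗ[R] N)
  | d + 1, N, K => ∃ L : ModuleCat.{0} R, IsMinimalSyzygy1 R N L ∧ IsMinimalSyzygy R d L K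

/-- A module is indecomposable if it is nonzero and is not isomorphic to the direct sum of
two nonzero modules. -/
def IndecomposableModule (R : Type) [CommRing R] (M : Type) [AddCommGroup M] [Module R M] :
    Prop :=
  Nontrivial M ∧ ∀ (A B : Type) [AddCommGroup A] [Module R A] [AddCommGroup B] [Module R B],
    Nonempty (M ≃ₗ[R] A × B) → (Subsingleton A ∨ Subsingleton B)

/-!
Let `a` annihilate `Ext¹(K, L)` for all `K, L ∈ CM₀(R)`, let `p` be a prime with `a ∉ p`, and put
`d = dim R` and `m` the maximal ideal. If an ideal `J` contains a power of `m`, then every `d`-th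
syzygy `X` of `R/J` and its syzygy `ΩX` lie in `CM₀(R)`: by Ischebeck's theorem the localizations
of `R` are again Cohen-Macaulay, so `d`-th syzygies are maximal Cohen-Macaulay at every prime. As
`a` kills `Ext¹(X, ΩX)`, multiplication by `a` on `X` factors through a free module, so `a` kills
`Tor₁(X, -)`; by dimension shifting it then kills `Tor₁(R/J, C)` for every `d`-th syzygy `C`.
Taking `J = p + m^k` and letting `k` grow, Krull's intersection theorem shows that `a` kills
`Tor₁(R/p, C)` for `C` a `d`-th syzygy of `R/p`.
At `p` the element `a` is a unit, so `C_p` is free, the residue field of `R_p` has finite projective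
dimension, and `R_p` is regular by Serre's theorem.

Serre's theorem is proved by induction on the dimension of the local ring `S`. If the maximal
ideal `n` of `S` is killed by a nonzero element, modules of finite projective dimension are free
and `n = 0`. Otherwise there is a nonzerodivisor `x ∈ n \ n²`, and the residue field is a direct
summand of `n/xn`, so that it has finite projective dimension over `S/x`.
-/

universe u

section ExtComparison

variable {S : Type} [CommRing S] {M : ModuleCat.{0} S} (P : ProjectiveResolution M)
  (N : ModuleCat.{0} S)

lemma extMk_smul {n : ℕ} (a : S) (f : P.complex.X n ⟶ N) (m : ℕ) (hm : n + 1 = m)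
    (hf : P.complex.d m n ≫ f = 0) :
    P.extMk (a • f) m hm (by simp [hf]) = a • P.extMk f m hm hf := by
  simpa [Abelian.Ext.mk₀_smul] using (P.extMk_comp_mk₀ f m hm hf (a • 𝟙 N)).symm

lemma extMk_eq_zero_iff_of_degree_zero (f : P.complex.X 0 ⟶ N) (m : ℕ) (hm : 0 + 1 = m)
    (hf : P.complex.d m 0 ≫ f = 0) :
    P.extMk f m hm hf = 0 ↔ f = 0 := by
  refine ⟨fun h ↦ ?_, by rintro rfl; exact P.extMk_zero m hm⟩
  rw [← P.extEquivCohomologyClass.apply_eq_iff_eq, P.extEquivCohomologyClass_extMk,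
    P.extEquivCohomologyClass_zero, CochainComplex.HomComplex.CohomologyClass.mk_eq_zero_iff,
    CochainComplex.HomComplex.Cocycle.toSingleMk_mem_coboundaries_iff _ _ _ _ _ 1 (by simp)] at h
  obtain ⟨g, hg⟩ := h
  have hg0 : g = 0 := (P.cochainComplex.isZero_of_isStrictlyLE 0 1 (by simp)).eq_of_src g 0
  rw [hg0, Limits.comp_zero] at hg
  rw [← cancel_epi (P.cochainComplexXIso (-(0:ℕ)) 0 rfl).hom, ← hg, Limits.comp_zero]

lemma extMk_eq_zero_iff_exists_prev {n : ℕ} (f : P.complex.X n ⟶ N) (m : ℕ) (hm : n + 1 = m)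
    (hf : P.complex.d m n ≫ f = 0) :
    P.extMk f m hm hf = 0 ↔ ∃ g : P.complex.X ((ComplexShape.up ℕ).prev n) ⟶ N,
      P.complex.d n ((ComplexShape.up ℕ).prev n) ≫ g = f := by
  cases n with
  | zero =>
    rw [extMk_eq_zero_iff_of_degree_zero, P.complex.shape _ _ (by simp)]
    simp [eq_comm]
  | succ n => exact P.extMk_eq_zero_iff _ _ _ _ _ (by simp)

/-- The map sending an `n`-cocycle of `Hom(P, N)`, for a projective resolution `P` of `M`, to its
class in `Ext^n(M, N)`. -/
def cocyclesToExt (n : ℕ) :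
    LinearMap.ker ((P.complex.linearYonedaObj S N).sc n).g.hom →ₗ[S] Abelian.Ext M N n where
  toFun f := P.extMk (n := n) f.1 ((ComplexShape.up ℕ).next n) (by simp) f.2
  map_add' f g := (P.add_extMk (n := n) f.1 g.1 _ (by simp) f.2 g.2).symm
  map_smul' a f := extMk_smul P N (n := n) a f.1 _ (by simp) f.2

lemma cocyclesToExt_surjective (n : ℕ) : Function.Surjective (cocyclesToExt P N n) := by
  intro x
  obtain ⟨f, hf, rfl⟩ := P.extMk_surjective x ((ComplexShape.up ℕ).next n) (by simp)
  exact ⟨⟨f, hf⟩, rfl⟩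

lemma ker_cocyclesToExt (n : ℕ) : LinearMap.ker (cocyclesToExt P N n) =
    LinearMap.range ((P.complex.linearYonedaObj S N).sc n).moduleCatToCycles := by
  ext f
  exact (extMk_eq_zero_iff_exists_prev P N (n := n) f.1 _ (by simp) f.2).trans
    (exists_congr fun g ↦ ⟨fun h ↦ Subtype.ext h, fun h ↦ congrArg Subtype.val h⟩)

lemma nonempty_extMod_linearEquiv_ext (M : ModuleCat.{0} S) (n : ℕ) :
    Nonempty (ExtMod S n M N ≃ₗ[S] Abelian.Ext M N n) := by
  let P := projectiveResolution M
  exact ⟨(P.isoExt n N).toLinearEquiv.trans <|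
    ((P.complex.linearYonedaObj S N).sc n).moduleCatHomologyIso.toLinearEquiv.trans <|
    (Submodule.quotEquivOfEq _ _ (ker_cocyclesToExt P N n).symm).trans <|
    (cocyclesToExt P N n).quotKerEquivOfSurjective (cocyclesToExt_surjective P N n)⟩

end ExtComparison

section ExtVanishing

variable {R : Type u} [CommRing R]

/-- `Ext^j(X, Y) = 0` for all `j < n`. For `X` the residue field of a local ring this says
`depth Y ≥ n`. -/
def ExtVanishesBelow (X Y : ModuleCat.{u} R) (n : ℕ) : Prop :=
  ∀ j < n, Subsingleton (Abelian.Ext X Y j)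

lemma ExtVanishesBelow.mono {X Y : ModuleCat.{u} R} {m n : ℕ} (h : ExtVanishesBelow X Y n)
    (hmn : m ≤ n) : ExtVanishesBelow X Y m :=
  fun j hj ↦ h j (hj.trans_le hmn)

lemma ExtVanishesBelow.of_free {X : ModuleCat.{u} R} {n : ℕ}
    (h : ExtVanishesBelow X (ModuleCat.of R R) n) (F : Type u) [AddCommGroup F] [Module R F]
    [Module.Free R F] [Module.Finite R F] : ExtVanishesBelow X (ModuleCat.of R F) n := by
  intro j hj
  have := h j hj
  let b := Module.Free.chooseBasis R F
  have id_eq_sum : 𝟙 (ModuleCat.of R F) = ∑ i, ModuleCat.ofHom (b.coord i) ≫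
      ModuleCat.ofHom (LinearMap.toSpanSingleton R F (b i)) := by
    ext y
    simp [ModuleCat.hom_sum, b.sum_repr]
  refine subsingleton_of_forall_eq 0 fun x ↦ ?_
  rw [← Abelian.Ext.comp_mk₀_id x, id_eq_sum, Abelian.Ext.mk₀_sum, Abelian.Ext.comp_sum]
  refine Finset.sum_eq_zero fun i _ ↦ ?_
  rw [← Abelian.Ext.mk₀_comp_mk₀, ← Abelian.Ext.comp_assoc_of_second_deg_zero,
    Subsingleton.elim (x.comp (Abelian.Ext.mk₀ (ModuleCat.ofHom (b.coord i))) (add_zero j)) 0,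
    Abelian.Ext.zero_comp]

lemma ExtVanishesBelow.of_shortExact {X : ModuleCat.{u} R} {S : ShortComplex (ModuleCat.{u} R)}
    (hS : S.ShortExact) {n : ℕ} (h₂ : ExtVanishesBelow X S.X₂ (n + 1))
    (h₃ : ExtVanishesBelow X S.X₃ n) : ExtVanishesBelow X S.X₁ (n + 1) := by
  intro j hj
  have := h₂ j hj
  refine subsingleton_of_forall_eq 0 fun x ↦ ?_
  cases j with
  | zero =>
    have := hS.mono_f
    refine (Abelian.Ext.postcomp_mk₀_injective_of_mono X S.f) ?_
    exact Subsingleton.elim _ _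
  | succ j =>
    have := h₃ j (by lia)
    obtain ⟨z, rfl⟩ := Abelian.Ext.covariant_sequence_exact₁ X hS x (Subsingleton.elim _ _) rfl
    rw [Subsingleton.elim z 0, Abelian.Ext.zero_comp]

lemma subsingleton_ext_X₂ {S : ShortComplex (ModuleCat.{u} R)} (hS : S.ShortExact)
    (Y : ModuleCat.{u} R) (j : ℕ) [Subsingleton (Abelian.Ext S.X₁ Y j)]
    [Subsingleton (Abelian.Ext S.X₃ Y j)] : Subsingleton (Abelian.Ext S.X₂ Y j) := by
  refine subsingleton_of_forall_eq 0 fun x ↦ ?_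
  obtain ⟨z, rfl⟩ := Abelian.Ext.contravariant_sequence_exact₂ hS Y x (Subsingleton.elim _ _)
  rw [Subsingleton.elim z 0, Abelian.Ext.comp_zero]

lemma subsingleton_ext_of_iso {X X' : ModuleCat.{u} R} (e : X ≅ X') (Y : ModuleCat.{u} R) (j : ℕ)
    [Subsingleton (Abelian.Ext X Y j)] : Subsingleton (Abelian.Ext X' Y j) := by
  refine subsingleton_of_forall_eq 0 fun x ↦ ?_
  rw [← Abelian.Ext.mk₀_id_comp x, ← e.inv_hom_id, ← Abelian.Ext.mk₀_comp_mk₀_assoc,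
    Subsingleton.elim ((Abelian.Ext.mk₀ e.hom).comp x (zero_add j)) 0, Abelian.Ext.comp_zero]

lemma subsingleton_ext_of_subsingleton (X Y : ModuleCat.{u} R) [Subsingleton X] (j : ℕ) :
    Subsingleton (Abelian.Ext X Y j) :=
  have := (hasProjectiveDimensionLT_zero_iff_isZero X).mpr (ModuleCat.isZero_of_subsingleton X)
  HasProjectiveDimensionLT.subsingleton X 0 j j.zero_le Y

lemma mk₀_smul_id_comp {X Y : ModuleCat.{u} R} (a : R) {j : ℕ} (z : Abelian.Ext X Y j) :
    (Abelian.Ext.mk₀ (a • 𝟙 X)).comp z (zero_add j) = a • z := by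
  rw [Abelian.Ext.mk₀_smul, Abelian.Ext.smul_comp, Abelian.Ext.mk₀_id_comp]

end ExtVanishing

section Ischebeck

lemma isSMulRegular_quotient_of_notMem {R : Type*} [CommRing R] (p : Ideal R) [p.IsPrime] {x : R}
    (hx : x ∉ p) : IsSMulRegular (R ⧸ p) x := by
  intro y z hyz
  refine mul_left_cancel₀ (Ideal.Quotient.eq_zero_iff_mem.not.mpr hx) ?_
  simpa only [Algebra.smul_def, Ideal.Quotient.algebraMap_eq] using hyz

variable {R : Type u} [CommRing R] [IsLocalRing R]

lemma subsingleton_of_forall_exists_smul_eq {E : Type*} [AddCommGroup E] [Module R E]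
    [Module.Finite R E] {x : R} (hx : x ∈ maximalIdeal R) (h : ∀ y : E, ∃ z, x • z = y) :
    Subsingleton E := by
  have top_le : (⊤ : Submodule R E) ≤ maximalIdeal R • ⊤ := by
    intro y _
    obtain ⟨z, rfl⟩ := h y
    exact Submodule.smul_mem_smul hx Submodule.mem_top
  have top_eq_bot := Submodule.eq_bot_of_le_smul_of_le_jacobson_bot _ _ Module.Finite.fg_top
    top_le (maximalIdeal_le_jacobson _)
  exact (Submodule.subsingleton_iff R).mp (subsingleton_of_bot_eq_top top_eq_bot.symm)

variable [IsNoetherianRing R]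

lemma subsingleton_ext_of_quotSMulTop (M N : Type u) [AddCommGroup M] [Module R M]
    [Module.Finite R M] [AddCommGroup N] [Module R N] [Module.Finite R N] {x : R}
    (hx : x ∈ maximalIdeal R) (hreg : IsSMulRegular M x) (j : ℕ)
    (h : Subsingleton (Abelian.Ext (ModuleCat.of R (QuotSMulTop x M)) (ModuleCat.of R N) (1 + j))) :
    Subsingleton (Abelian.Ext (ModuleCat.of R M) (ModuleCat.of R N) j) := by
  refine subsingleton_of_forall_exists_smul_eq hx fun y ↦ ?_
  obtain ⟨z, hz⟩ := Abelian.Ext.contravariant_sequence_exact₁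
    (IsSMulRegular.smulShortComplex_shortExact (M := ModuleCat.of R M) hreg) _ y rfl
    (h.elim _ _)
  exact ⟨z, (mk₀_smul_id_comp x z).symm.trans hz⟩

lemma supportDim_quotSMulTop_lt {M : Type*} [AddCommGroup M] [Module R M] [Module.Finite R M]
    {x : R} (hx : x ∈ maximalIdeal R) (hreg : IsSMulRegular M x) {n : ℕ}
    (h : Module.supportDim R M < (n + 1 : ℕ)) : Module.supportDim R (QuotSMulTop x M) < n := by
  rw [← Module.supportDim_quotSMulTop_succ_eq_supportDim hreg hx] at h
  cases hdim : Module.supportDim R (QuotSMulTop x M) with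
  | bot => exact WithBot.bot_lt_coe _
  | coe a =>
    rw [hdim] at h
    have h' : a + 1 < (n : ℕ∞) + 1 := by exact_mod_cast h
    exact_mod_cast lt_of_add_lt_add_right h'

variable (N : Type u) [AddCommGroup N] [Module R N] [Module.Finite R N]

/-- Ischebeck's theorem: `Ext^j(M, N) = 0` whenever `j + dim M < depth N`. -/
theorem subsingleton_ext_of_supportDim_lt {d : ℕ}
    (hN : ExtVanishesBelow (ModuleCat.of R (ResidueField R)) (ModuleCat.of R N) d) (n : ℕ)
    (M : Type u) [AddCommGroup M] [Module R M] [hM : Module.Finite R M]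
    (hdim : Module.supportDim R M < n) (j : ℕ) (hj : j + n ≤ d) :
    Subsingleton (Abelian.Ext (ModuleCat.of R M) (ModuleCat.of R N) j) := by
  induction n generalizing M j with
  | zero =>
    have : Subsingleton M := by
      rw [← Module.supportDim_eq_bot_iff_subsingleton R]
      cases hM : Module.supportDim R M with
      | bot => rfl
      | coe a => rw [hM] at hdim; norm_cast at hdim
    exact subsingleton_ext_of_subsingleton _ _ j
  | succ n ih =>
    induction hM using IsNoetherianRing.induction_on_isQuotientEquivQuotientPrime R with
    | subsingleton M => exact subsingleton_ext_of_subsingleton _ _ j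
    | quotient M p e =>
      by_cases hp : p.1 = maximalIdeal R
      · have := hN j (by lia)
        have residueField_iso : ModuleCat.of R (ResidueField R) ≅ ModuleCat.of R M :=
          ((Submodule.quotEquivOfEq _ _ hp.symm).trans e.symm).toModuleIso
        exact subsingleton_ext_of_iso residueField_iso _ j
      · obtain ⟨x, hxm, hxp⟩ := SetLike.exists_of_lt
          (lt_of_le_of_ne (le_maximalIdeal p.2.ne_top) hp)
        have hreg : IsSMulRegular M x :=
          (e.isSMulRegular_congr x).mpr (isSMulRegular_quotient_of_notMem p.1 hxp)
        exact subsingleton_ext_of_quotSMulTop M N hxm hreg j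
          (ih _ (supportDim_quotSMulTop_lt hxm hreg hdim) (1 + j) (by lia))
    | exact M₁ M₂ M₃ f g hf hg hfg ih₁ ih₃ =>
      have := ih₁ ((Module.supportDim_le_of_injective f hf).trans_lt hdim)
      have := ih₃ ((Module.supportDim_le_of_surjective g hg).trans_lt hdim)
      exact subsingleton_ext_X₂ (ModuleCat.shortComplex_shortExact
        (ModuleCat.shortComplexOfCompEqZero f g hfg.linearMap_comp_eq_zero) hfg hf hg) _ j

end Ischebeck

section DepthLocalization

lemma le_moduleDepth_iff (S N : Type) [CommRing S] [IsLocalRing S] [AddCommGroup N] [Module S N]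
    (n : ℕ) : (n : ℕ∞) ≤ moduleDepth S N ↔
      ExtVanishesBelow (ModuleCat.of S (ResidueField S)) (ModuleCat.of S N) n := by
  have nontrivial_iff (j : ℕ) :
      Nontrivial (ExtMod S j (ModuleCat.of S (ResidueField S)) (ModuleCat.of S N)) ↔
        ¬ Subsingleton
          (Abelian.Ext (ModuleCat.of S (ResidueField S)) (ModuleCat.of S N) j) := by
    obtain ⟨e⟩ := nonempty_extMod_linearEquiv_ext (ModuleCat.of S N)
      (ModuleCat.of S (ResidueField S)) j
    rw [not_subsingleton_iff_nontrivial, e.toEquiv.nontrivial_congr]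
  simp only [moduleDepth, le_sInf_iff, Set.mem_ofPred_eq, nontrivial_iff, ExtVanishesBelow]
  constructor
  · intro h j hj
    by_contra hnontrivial
    exact absurd (h j ⟨j, rfl, hnontrivial⟩) (not_le.mpr (by exact_mod_cast hj))
  · rintro h _ ⟨j, rfl, hnontrivial⟩
    by_contra hlt
    exact hnontrivial (h j (by exact_mod_cast not_le.mp hlt))

lemma support_quotient_eq_zeroLocus {S : Type*} [CommRing S] (I : Ideal S) :
    Module.support S (S ⧸ I) = PrimeSpectrum.zeroLocus I := by
  rw [Module.support_eq_zeroLocus, Ideal.annihilator_quotient]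

lemma ideal_smul_top_lt_top {S : Type*} [CommRing S] {I : Ideal S} (hI : I ≠ ⊤) :
    I • (⊤ : Submodule S S) < ⊤ := by
  rwa [lt_top_iff_ne_top, smul_eq_mul, Ideal.mul_top]

lemma exists_ringKrullDim_eq_natCast (R : Type*) [CommRing R] [FiniteRingKrullDim R] :
    ∃ d : ℕ, ringKrullDim R = d :=
  ⟨_, Order.krullDim_eq_length_of_finiteDimensionalOrder⟩

lemma ringKrullDim_localization_add_ringKrullDim_quotient_le {R : Type*} [CommRing R]
    (p : Ideal R) [hp : p.IsPrime] :
    ringKrullDim (Localization.AtPrime p) + ringKrullDim (R ⧸ p) ≤ ringKrullDim R := by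
  have : Nonempty (PrimeSpectrum R) := ⟨⟨p, hp⟩⟩
  have dim_quotient : ringKrullDim (R ⧸ p) = Order.coheight (⟨p, hp⟩ : PrimeSpectrum R) := by
    rw [ringKrullDim_quotient, Order.coheight_eq_krullDim_Ici]
    rfl
  have height_eq : p.height = Order.height (⟨p, hp⟩ : PrimeSpectrum R) :=
    PrimeSpectrum.height_eq_orderHeight ⟨p, hp⟩
  rw [IsLocalization.AtPrime.ringKrullDim_eq_height p, dim_quotient, height_eq, ringKrullDim,
    Order.krullDim_eq_iSup_height_add_coheight_of_nonempty, ← WithBot.coe_add, WithBot.coe_le_coe]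
  exact le_iSup (fun q : PrimeSpectrum R ↦ Order.height q + Order.coheight q) ⟨p, hp⟩

variable {R : Type u} [CommRing R] [IsNoetherianRing R]

lemma extVanishesBelow_localization_of_isWeaklyRegular (p : Ideal R) [p.IsPrime] {rs : List R}
    (hreg : RingTheory.Sequence.IsWeaklyRegular R rs) (hmem : ∀ r ∈ rs, r ∈ p) :
    ExtVanishesBelow
      (ModuleCat.of (Localization.AtPrime p) (ResidueField (Localization.AtPrime p)))
      (ModuleCat.of (Localization.AtPrime p) (Localization.AtPrime p)) rs.length := by
  have hreg' := hreg.isRegular_of_isLocalization_of_mem (Localization.AtPrime p) p hmem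
  intro j hj
  refine ModuleCat.subsingleton_ext_of_exists_isRegular (maximalIdeal (Localization.AtPrime p))
    (ModuleCat.of _ (ResidueField (Localization.AtPrime p)))
    (support_quotient_eq_zeroLocus (maximalIdeal (Localization.AtPrime p))).le
    (ModuleCat.of _ (Localization.AtPrime p)) (ideal_smul_top_lt_top Ideal.IsPrime.ne_top') _ ?_
    hreg' j (by simpa only [List.length_map])
  simpa only [List.forall_mem_map, IsLocalization.AtPrime.to_map_mem_maximal_iff _ p] using hmem

lemma ExtVanishesBelow.localization [IsLocalRing R] {d : ℕ}
    (hR : ExtVanishesBelow (ModuleCat.of R (ResidueField R)) (ModuleCat.of R R) d)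
    (p : Ideal R) [p.IsPrime] {h : ℕ} (hdim : ringKrullDim (R ⧸ p) + h ≤ d) :
    ExtVanishesBelow
      (ModuleCat.of (Localization.AtPrime p) (ResidueField (Localization.AtPrime p)))
      (ModuleCat.of (Localization.AtPrime p) (Localization.AtPrime p)) h := by
  have : IsLocalRing (R ⧸ p) :=
    .of_surjective' (Ideal.Quotient.mk p) Ideal.Quotient.mk_surjective
  obtain ⟨n, hn⟩ := exists_ringKrullDim_eq_natCast (R ⧸ p)
  have ext_quotient_vanishes : ∀ i < h,
      Subsingleton (Abelian.Ext (ModuleCat.of R (R ⧸ p)) (ModuleCat.of R R) i) := by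
    intro i hi
    rw [hn] at hdim
    have hdim' : n + h ≤ d := by exact_mod_cast hdim
    refine subsingleton_ext_of_supportDim_lt R hR (n + 1) (R ⧸ p) ?_ i (by lia)
    rw [Module.supportDim_quotient_eq_ringKrullDim, hn]
    exact_mod_cast n.lt_succ_self
  obtain ⟨rs, rfl, hmem, hreg⟩ := ModuleCat.exists_isRegular_of_exists_subsingleton_ext p h
    (ModuleCat.of R R) (ideal_smul_top_lt_top Ideal.IsPrime.ne_top') (ModuleCat.of R (R ⧸ p))
    (support_quotient_eq_zeroLocus p) ext_quotient_vanishes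
  exact extVanishesBelow_localization_of_isWeaklyRegular p hreg.1 hmem

end DepthLocalization

section Syzygy

/-- `IsSyzygy M i K` says that `K` is an `i`-th syzygy of `M` for some, not necessarily minimal,
resolution of `M` by finite free modules. -/
inductive IsSyzygy {R : Type u} [CommRing R] (M : ModuleCat.{u} R) : ℕ → ModuleCat.{u} R → Prop
  | zero : IsSyzygy M 0 M
  | ker {i : ℕ} {L : ModuleCat.{u} R} (hL : IsSyzygy M i L) {n : ℕ} (f : (Fin n → R) →ₗ[R] L)
      (hf : Function.Surjective f) : IsSyzygy M (i + 1) (ModuleCat.of R (LinearMap.ker f))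

lemma projective_of_exact {S A B C : Type*} [CommRing S] [AddCommGroup A] [AddCommGroup B]
    [AddCommGroup C] [Module S A] [Module S B] [Module S C] [Module.Projective S B]
    [Module.Projective S C] {f : A →ₗ[S] B} {g : B →ₗ[S] C} (hf : Function.Injective f)
    (hg : Function.Surjective g) (hfg : Function.Exact f g) : Module.Projective S A := by
  obtain ⟨s, hs⟩ := Module.projective_lifting_property g LinearMap.id hg
  obtain ⟨_, l, hl⟩ := (hfg.split_tfae'.out 0 1 rfl rfl).mp ⟨hf, s, hs⟩
  exact Module.Projective.of_split f l hl

lemma localizedModule_map_ker_subtype_exact {R M L : Type*} [CommRing R] [AddCommGroup M]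
    [AddCommGroup L] [Module R M] [Module R L] (W : Submonoid R) (f : M →ₗ[R] L) :
    Function.Exact (LocalizedModule.map W (LinearMap.ker f).subtype) (LocalizedModule.map W f) :=
  LocalizedModule.map_exact W _ _ f.exact_subtype_ker_map

variable {R : Type u} [CommRing R] {M K : ModuleCat.{u} R} {i : ℕ}

lemma IsSyzygy.finite [IsNoetherianRing R] [hM : Module.Finite R M] (hK : IsSyzygy M i K) :
    Module.Finite R K := by
  cases hK with
  | zero => exact hM
  | ker _ f _ => exact inferInstanceAs (Module.Finite R (LinearMap.ker f))

lemma exists_isSyzygy [IsNoetherianRing R] (M : ModuleCat.{u} R) [Module.Finite R M] (i : ℕ) :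
    ∃ K, IsSyzygy M i K := by
  induction i with
  | zero => exact ⟨M, .zero⟩
  | succ i ih =>
    obtain ⟨L, hL⟩ := ih
    have := hL.finite
    obtain ⟨n, f, hf⟩ := Module.Finite.exists_fin' R L
    exact ⟨_, hL.ker f hf⟩

lemma IsSyzygy.extVanishesBelow_localized (hK : IsSyzygy M i K) (W : Submonoid R)
    {X : ModuleCat.{u} (Localization W)} {n : ℕ} (hn : n ≤ i)
    (hR : ExtVanishesBelow X (ModuleCat.of (Localization W) (Localization W)) n) :
    ExtVanishesBelow X (ModuleCat.of (Localization W) (LocalizedModule W K)) n := by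
  induction hK generalizing n with
  | zero =>
    intro j hj
    lia
  | @ker i L _ k f hf ih =>
    cases n with
    | zero => exact fun j hj ↦ absurd hj j.not_lt_zero
    | succ n =>
      have : Module.Free (Localization W) (LocalizedModule W (Fin k → R)) :=
        Module.free_of_isLocalizedModule W (LocalizedModule.mkLinearMap W _)
      have : Module.Finite (Localization W) (LocalizedModule W (Fin k → R)) :=
        Module.Finite.of_isLocalizedModule W (LocalizedModule.mkLinearMap W _)
      have hexact := localizedModule_map_ker_subtype_exact W f
      exact .of_shortExact (ModuleCat.shortComplex_shortExact
        (ModuleCat.shortComplexOfCompEqZero _ _ hexact.linearMap_comp_eq_zero) hexact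
        (LocalizedModule.map_injective W _ (Submodule.injective_subtype _))
        (LocalizedModule.map_surjective W _ hf))
        (hR.of_free (LocalizedModule W (Fin k → R)))
        (ih (by lia) (hR.mono n.le_succ))

lemma IsSyzygy.projective_localized (hK : IsSyzygy M i K) (W : Submonoid R)
    [Module.Projective (Localization W) (LocalizedModule W M)] :
    Module.Projective (Localization W) (LocalizedModule W K) := by
  induction hK with
  | zero => assumption
  | @ker _ L _ k f hf ih =>
    have : Module.Free (Localization W) (LocalizedModule W (Fin k → R)) :=
      Module.free_of_isLocalizedModule W (LocalizedModule.mkLinearMap W _)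
    exact projective_of_exact (LocalizedModule.map_injective W _ (Submodule.injective_subtype _))
      (LocalizedModule.map_surjective W _ hf) (localizedModule_map_ker_subtype_exact W f)

end Syzygy

section MemCM0

variable {R : Type} [CommRing R] [IsNoetherianRing R] [IsLocalRing R]

lemma IsCMLocalRing.extVanishesBelow_localization (hCM : IsCMLocalRing R) (p : Ideal R)
    [p.IsPrime] {h : ℕ} (hh : ringKrullDim (Localization.AtPrime p) = h) :
    ExtVanishesBelow
      (ModuleCat.of (Localization.AtPrime p) (ResidueField (Localization.AtPrime p)))
      (ModuleCat.of (Localization.AtPrime p) (Localization.AtPrime p)) h := by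
  obtain ⟨d, hd⟩ := exists_ringKrullDim_eq_natCast R
  have depth_eq : moduleDepth R R = d := by exact_mod_cast hCM.trans hd
  refine ((le_moduleDepth_iff R R d).mp depth_eq.ge).localization p ?_
  rw [← hh, ← hd, add_comm]
  exact ringKrullDim_localization_add_ringKrullDim_quotient_le p

lemma memCM0_of_isSyzygy (hCM : IsCMLocalRing R) {M K : ModuleCat.{0} R} [Module.Finite R M]
    (hM : ∀ (p : Ideal R) [p.IsPrime], p ≠ maximalIdeal R →
      Module.Projective (Localization.AtPrime p) (LocalizedModule p.primeCompl M))
    {i : ℕ} (hi : ringKrullDim R ≤ i) (hK : IsSyzygy M i K) : MemCM0 R K := by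
  have := hK.finite
  refine ⟨this, fun p _ ↦ ?_, fun p _ hp ↦ ?_⟩
  · obtain ⟨h, hh⟩ := exists_ringKrullDim_eq_natCast (Localization.AtPrime p)
    have h_le : h ≤ i := by
      rw [IsLocalization.AtPrime.ringKrullDim_eq_height p] at hh
      exact_mod_cast hh ▸ (Ideal.height_le_ringKrullDim_of_ne_top Ideal.IsPrime.ne_top').trans hi
    rw [hh]
    exact_mod_cast (le_moduleDepth_iff _ _ h).mpr
      (hK.extVanishesBelow_localized p.primeCompl h_le (hCM.extVanishesBelow_localization p hh))
  · have := hM p hp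
    have := hK.projective_localized p.primeCompl
    have : Module.Flat (Localization.AtPrime p) (LocalizedModule p.primeCompl K) :=
      Module.Flat.of_projective
    have : Module.Finite (Localization.AtPrime p) (LocalizedModule p.primeCompl K) :=
      Module.Finite.of_isLocalizedModule p.primeCompl (LocalizedModule.mkLinearMap p.primeCompl _)
    exact Module.free_of_flat_of_isLocalRing

end MemCM0

section TorAnnihilation

open TensorProduct

variable {R : Type u} [CommRing R] {a : R}

lemma exists_comp_eq_smul_id_of_mem_annihilator {F X : Type u} [AddCommGroup F] [Module R F]
    [AddCommGroup X] [Module R X] (f : F →ₗ[R] X) (hf : Function.Surjective f)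
    (ha : a ∈ Module.annihilator R
      (Abelian.Ext (ModuleCat.of R X) (ModuleCat.of R (LinearMap.ker f)) 1)) :
    ∃ s : X →ₗ[R] F, f ∘ₗ s = a • LinearMap.id := by
  have hS := LinearMap.shortExact_shortComplexKer hf
  have pullback_extClass :
      (Abelian.Ext.mk₀ (a • 𝟙 (ModuleCat.of R X))).comp hS.extClass (zero_add 1) = 0 :=
    (mk₀_smul_id_comp (X := ModuleCat.of R X) a hS.extClass).trans
      (Module.mem_annihilator.mp ha hS.extClass)
  obtain ⟨y, hy⟩ := Abelian.Ext.covariant_sequence_exact₃ _ hS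
    (Abelian.Ext.mk₀ (a • 𝟙 (ModuleCat.of R X))) _ pullback_extClass
  obtain ⟨s, rfl⟩ := (Abelian.Ext.homEquiv₀ (X := ModuleCat.of R X)).symm.surjective y
  have comp_eq : s ≫ ModuleCat.ofHom f = a • 𝟙 (ModuleCat.of R X) :=
    Abelian.Ext.homEquiv₀.symm.injective ((Abelian.Ext.mk₀_comp_mk₀ _ _).symm.trans hy)
  exact ⟨s.hom, congrArg ModuleCat.Hom.hom comp_eq⟩

/-- `a` annihilates `Tor₁(A, B)`, the latter being computed as the kernel of
`A ⊗ ker g → A ⊗ Rⁿ` for each presentation `g : Rⁿ → B`. -/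
def AnnihilatesTorOne (a : R) (A B : Type*) [AddCommGroup A] [Module R A] [AddCommGroup B]
    [Module R B] : Prop :=
  ∀ (n : ℕ) (g : (Fin n → R) →ₗ[R] B), Function.Surjective g → ∀ t : A ⊗[R] LinearMap.ker g,
    (LinearMap.ker g).subtype.lTensor A t = 0 → a • t = 0

section

variable {A A' B B' F G : Type*} [AddCommGroup A] [Module R A] [AddCommGroup A'] [Module R A']
  [AddCommGroup B] [Module R B] [AddCommGroup B'] [Module R B'] [AddCommGroup F] [Module R F]
  [AddCommGroup G] [Module R G]

lemma rTensor_lTensor_comm (f : A →ₗ[R] A') (g : B →ₗ[R] B') (t : A ⊗[R] B) :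
    f.rTensor B' (g.lTensor A t) = g.lTensor A' (f.rTensor B t) := by
  rw [← LinearMap.comp_apply, ← LinearMap.comp_apply, LinearMap.rTensor_comp_lTensor,
    LinearMap.lTensor_comp_rTensor]

lemma annihilatesTorOne_of_comp_eq_smul_id [Module.Flat R F] {f : F →ₗ[R] A} {s : A →ₗ[R] F}
    (hs : f ∘ₗ s = a • LinearMap.id) : AnnihilatesTorOne a A B := by
  intro m g _ t ht
  have s_t_eq_zero : s.rTensor _ t = 0 := by
    apply Module.Flat.lTensor_preserves_injective_linearMap (M := F)
      (LinearMap.ker g).subtype (Submodule.injective_subtype _)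
    rw [← rTensor_lTensor_comm, ht, map_zero, map_zero]
  calc a • t = (f ∘ₗ s).rTensor (LinearMap.ker g) t := by
        rw [hs, LinearMap.rTensor_smul, LinearMap.rTensor_id]; rfl
    _ = 0 := by rw [LinearMap.rTensor_comp, LinearMap.comp_apply, s_t_eq_zero, map_zero]

-- The balancing of `Tor₁(A, B)` between the presentations `F → A` and `G → B`, on elements.
lemma smul_eq_zero_of_lTensor_eq_zero [Module.Flat R F] {i : A' →ₗ[R] F} {π : F →ₗ[R] A}
    (hπ : Function.Surjective π) (hi : Function.Exact i π) {j : B' →ₗ[R] G} {ρ : G →ₗ[R] B}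
    (hj : Function.Injective j) (hρ : Function.Surjective ρ) (hjρ : Function.Exact j ρ)
    (h : ∀ u : A' ⊗[R] B, i.rTensor B u = 0 → a • u = 0) (t : A ⊗[R] B')
    (ht : j.lTensor A t = 0) : a • t = 0 := by
  obtain ⟨t', rfl⟩ := LinearMap.rTensor_surjective B' hπ t
  rw [← rTensor_lTensor_comm] at ht
  obtain ⟨w, hw⟩ := (rTensor_exact G hi hπ _).mp ht
  have connecting_mem_ker : i.rTensor B (ρ.lTensor A' w) = 0 := by
    rw [rTensor_lTensor_comm, hw, ← LinearMap.comp_apply, ← LinearMap.lTensor_comp,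
      hjρ.linearMap_comp_eq_zero, LinearMap.lTensor_zero, LinearMap.zero_apply]
  obtain ⟨v, hv⟩ := (lTensor_exact A' hjρ hρ (a • w)).mp
    ((map_smul _ a w).trans (h _ connecting_mem_ker))
  have smul_t'_eq : a • t' = i.rTensor B' v := by
    apply Module.Flat.lTensor_preserves_injective_linearMap (M := F) j hj
    rw [← rTensor_lTensor_comm, hv, map_smul, map_smul, hw]
  rw [← map_smul, smul_t'_eq, ← LinearMap.comp_apply, ← LinearMap.rTensor_comp,
    hi.linearMap_comp_eq_zero, LinearMap.rTensor_zero, LinearMap.zero_apply]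

lemma AnnihilatesTorOne.shift [Module.Flat R F] {f : F →ₗ[R] A} (hf : Function.Surjective f)
    {m : ℕ} {g : (Fin m → R) →ₗ[R] B} (hg : Function.Surjective g)
    (h : AnnihilatesTorOne a (LinearMap.ker f) B) : AnnihilatesTorOne a A (LinearMap.ker g) := by
  intro k g' hg' t ht
  refine smul_eq_zero_of_lTensor_eq_zero hf f.exact_subtype_ker_map
    (Submodule.injective_subtype _) hg' g'.exact_subtype_ker_map (fun u hu ↦ h m g hg u ?_) t ht
  apply Module.Flat.rTensor_preserves_injective_linearMap (M := Fin m → R)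
    (LinearMap.ker f).subtype (Submodule.injective_subtype _)
  rw [rTensor_lTensor_comm, hu, map_zero, map_zero]

lemma one_tmul_eq_zero_iff_mem_smul_top (J : Ideal R) (x : A) :
    (1 : R ⧸ J) ⊗ₜ[R] x = 0 ↔ x ∈ J • (⊤ : Submodule R A) := by
  rw [← (quotTensorEquivQuotSMul A J).map_eq_zero_iff, quotTensorEquivQuotSMul_mk_one_tmul,
    Submodule.Quotient.mk_eq_zero]

lemma AnnihilatesTorOne.smul_mem_smul_top {J : Ideal R} (h : AnnihilatesTorOne a (R ⧸ J) B)
    {n : ℕ} {g : (Fin n → R) →ₗ[R] B} (hg : Function.Surjective g) {z : LinearMap.ker g}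
    (hz : (z : Fin n → R) ∈ J • (⊤ : Submodule R (Fin n → R))) :
    a • z ∈ J • (⊤ : Submodule R (LinearMap.ker g)) := by
  rw [← one_tmul_eq_zero_iff_mem_smul_top, tmul_smul]
  refine h n g hg _ ?_
  rwa [LinearMap.lTensor_tmul, one_tmul_eq_zero_iff_mem_smul_top]

end

lemma annihilatesTorOne_of_isSyzygy {M K : ModuleCat.{u} R} {i : ℕ} (hK : IsSyzygy M i K) {s : ℕ}
    (h : ∀ B C : ModuleCat.{u} R, IsSyzygy B s C → AnnihilatesTorOne a K C)
    {B C : ModuleCat.{u} R} (hC : IsSyzygy B (s + i) C) : AnnihilatesTorOne a M C := by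
  induction hK generalizing s with
  | zero => exact h B C hC
  | @ker i L _ n f hf ih =>
    refine ih (s := s + 1) (fun B C hC ↦ ?_) (by rwa [add_right_comm])
    cases hC with
    | ker hD g hg => exact (h _ _ hD).shift hf hg

end TorAnnihilation

section SyzygiesOfPrimaryQuotients

variable {R : Type*} [CommRing R] [IsLocalRing R]

lemma mem_smul_top_of_forall_mem_sup_pow_smul_top [IsNoetherianRing R] {I : Ideal R} {Z : Type*}
    [AddCommGroup Z] [Module R Z] [Module.Finite R Z] {z : Z}
    (h : ∀ n : ℕ, z ∈ (I ⊔ maximalIdeal R ^ n) • (⊤ : Submodule R Z)) :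
    z ∈ I • (⊤ : Submodule R Z) := by
  have krull := Ideal.iInf_pow_smul_eq_bot_of_isLocalRing (R := R)
    (M := Z ⧸ I • (⊤ : Submodule R Z)) (maximalIdeal R) Ideal.IsPrime.ne_top'
  rw [← Submodule.Quotient.mk_eq_zero, ← Submodule.mem_bot R, ← krull, Submodule.mem_iInf]
  intro n
  have hz := h n
  rw [Submodule.sup_smul] at hz
  obtain ⟨u, hu, v, hv, rfl⟩ := Submodule.mem_sup.mp hz
  rw [Submodule.Quotient.mk_add, (Submodule.Quotient.mk_eq_zero _).mpr hu, zero_add]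
  have hv' := Submodule.mem_map_of_mem (f := (I • (⊤ : Submodule R Z)).mkQ) hv
  rw [Submodule.map_smul''] at hv'
  exact Submodule.smul_mono le_rfl le_top hv'

lemma subsingleton_localizedModule_quotient {J : Ideal R} {n : ℕ} (hJ : maximalIdeal R ^ n ≤ J)
    (q : Ideal R) [hq : q.IsPrime] (hqm : q ≠ maximalIdeal R) :
    Subsingleton (LocalizedModule q.primeCompl (R ⧸ J)) := by
  rw [LocalizedModule.subsingleton_iff]
  intro y
  obtain ⟨x, hxm, hxq⟩ := SetLike.exists_of_lt
    (lt_of_le_of_ne (le_maximalIdeal hq.ne_top) hqm)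
  refine ⟨x ^ n, fun h ↦ hxq (hq.mem_of_pow_mem n h), ?_⟩
  obtain ⟨y, rfl⟩ := Submodule.Quotient.mk_surjective J y
  rw [← Submodule.Quotient.mk_smul, Submodule.Quotient.mk_eq_zero]
  exact J.mul_mem_right _ (hJ (Ideal.pow_mem_pow hxm n))

end SyzygiesOfPrimaryQuotients

section ExtAnnihilator

variable {R : Type} [CommRing R] [IsNoetherianRing R] [IsLocalRing R]

/-- `a` annihilates `Ext¹(K, L)` for all `K, L ∈ CM₀(R)`. -/
def AnnihilatesExtOneCM0 (a : R) : Prop :=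
  ∀ ⦃K L : ModuleCat.{0} R⦄, MemCM0 R K → MemCM0 R L →
    a ∈ Module.annihilator R (Abelian.Ext K L 1)

variable {a : R} {d : ℕ} {B C : ModuleCat.{0} R}

lemma AnnihilatesExtOneCM0.annihilatesTorOne_quotient (ha : AnnihilatesExtOneCM0 a)
    (hCM : IsCMLocalRing R) (hd : ringKrullDim R ≤ d) {J : Ideal R} {k : ℕ}
    (hJ : maximalIdeal R ^ k ≤ J) (hC : IsSyzygy B d C) : AnnihilatesTorOne a (R ⧸ J) C := by
  have projective_localized : ∀ (q : Ideal R) [q.IsPrime], q ≠ maximalIdeal R →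
      Module.Projective (Localization.AtPrime q)
        (LocalizedModule q.primeCompl (ModuleCat.of R (R ⧸ J))) := by
    intro q _ hq
    have := subsingleton_localizedModule_quotient hJ q hq
    exact inferInstanceAs
      (Module.Projective (Localization.AtPrime q) (LocalizedModule q.primeCompl (R ⧸ J)))
  have : Module.Finite R (ModuleCat.of R (R ⧸ J)) := inferInstanceAs (Module.Finite R (R ⧸ J))
  obtain ⟨X, hX⟩ := exists_isSyzygy (ModuleCat.of R (R ⧸ J)) d
  have := hX.finite
  obtain ⟨m, f, hf⟩ := Module.Finite.exists_fin' R X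
  have hd' : ringKrullDim R ≤ (d + 1 : ℕ) := hd.trans (by exact_mod_cast d.le_succ)
  obtain ⟨s, hs⟩ := exists_comp_eq_smul_id_of_mem_annihilator f hf <|
    ha (memCM0_of_isSyzygy hCM projective_localized hd hX)
      (memCM0_of_isSyzygy hCM projective_localized hd' (hX.ker f hf))
  exact annihilatesTorOne_of_isSyzygy hX
    (fun _ _ _ ↦ annihilatesTorOne_of_comp_eq_smul_id hs) (hC := (zero_add d).symm ▸ hC)

lemma AnnihilatesExtOneCM0.smul_mem_smul_top (ha : AnnihilatesExtOneCM0 a)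
    (hCM : IsCMLocalRing R) (hd : ringKrullDim R ≤ d) (hC : IsSyzygy B d C) (I : Ideal R) {n : ℕ}
    {g : (Fin n → R) →ₗ[R] C} (hg : Function.Surjective g) {z : LinearMap.ker g}
    (hz : (z : Fin n → R) ∈ I • (⊤ : Submodule R (Fin n → R))) :
    a • z ∈ I • (⊤ : Submodule R (LinearMap.ker g)) :=
  mem_smul_top_of_forall_mem_sup_pow_smul_top fun _ ↦
    (ha.annihilatesTorOne_quotient hCM hd le_sup_right hC).smul_mem_smul_top hg
      (Submodule.smul_mono le_sup_left le_rfl hz)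

end ExtAnnihilator

section LocalFreeness

lemma lTensor_quotient_injective {S A B : Type*} [CommRing S] [AddCommGroup A] [AddCommGroup B]
    [Module S A] [Module S B] {J : Ideal S} {f : A →ₗ[S] B}
    (h : ∀ z, f z ∈ J • (⊤ : Submodule S B) → z ∈ J • (⊤ : Submodule S A)) :
    Function.Injective (f.lTensor (S ⧸ J)) := by
  rw [injective_iff_map_eq_zero]
  intro t ht
  obtain ⟨z, rfl⟩ := (TensorProduct.quotTensorEquivQuotSMul A J).symm.surjective t
  obtain ⟨z, rfl⟩ := Submodule.Quotient.mk_surjective _ z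
  rw [TensorProduct.quotTensorEquivQuotSMul_symm_mk] at ht ⊢
  rw [LinearMap.lTensor_tmul, one_tmul_eq_zero_iff_mem_smul_top] at ht
  exact (one_tmul_eq_zero_iff_mem_smul_top _ _).mpr (h z ht)

lemma free_of_forall_mem_maximalIdeal_smul_top {S A B C : Type*} [CommRing S] [IsLocalRing S]
    [AddCommGroup A] [AddCommGroup B] [AddCommGroup C] [Module S A] [Module S B] [Module S C]
    [Module.Finite S A] [Module.Finite S B] [Module.Free S B] {f : A →ₗ[S] B} {g : B →ₗ[S] C}
    (hg : Function.Surjective g) (hfg : Function.Exact f g)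
    (hmem : ∀ z, f z ∈ maximalIdeal S • (⊤ : Submodule S B) →
      z ∈ maximalIdeal S • (⊤ : Submodule S A)) : Module.Free S C := by
  exact Module.free_of_lTensor_residueField_injective f g hg hfg
    (lTensor_quotient_injective (J := maximalIdeal S) hmem)

variable {R : Type u} [CommRing R] (p : Ideal R) [p.IsPrime]

lemma localized'_atPrime_eq_maximalIdeal :
    Submodule.localized' (Localization.AtPrime p) p.primeCompl
      (Algebra.linearMap R (Localization.AtPrime p)) p = maximalIdeal (Localization.AtPrime p) := by
  rw [← Localization.AtPrime.map_eq_maximalIdeal]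
  exact Ideal.localized'_eq_map _ _ _

lemma mk_mem_maximalIdeal_smul_top_iff {M : Type*} [AddCommGroup M] [Module R M] (x : M)
    (s : p.primeCompl) :
    LocalizedModule.mk x s ∈ maximalIdeal (Localization.AtPrime p) •
      (⊤ : Submodule (Localization.AtPrime p) (LocalizedModule p.primeCompl M)) ↔
      ∃ t ∉ p, t • x ∈ p • (⊤ : Submodule R M) := by
  rw [← localized'_atPrime_eq_maximalIdeal, ← Submodule.localized'_top (Localization.AtPrime p)
    p.primeCompl (LocalizedModule.mkLinearMap p.primeCompl M), ← Submodule.localized'_smul,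
    Submodule.mem_localized']
  simp only [← IsLocalizedModule.mk_eq_mk']
  constructor
  · rintro ⟨y, hy, t, hyt⟩
    obtain ⟨c, hc⟩ := LocalizedModule.mk_eq.mp hyt
    refine ⟨c * t, (c * t).2, ?_⟩
    rw [← Submonoid.coe_mul, ← Submonoid.smul_def, mul_smul, ← hc]
    exact Submodule.smul_mem _ _ (Submodule.smul_mem _ _ hy)
  · rintro ⟨t, ht, hx⟩
    exact ⟨t • x, hx, ⟨t, ht⟩ * s, LocalizedModule.mk_cancel_common_left ⟨t, ht⟩ s x⟩

lemma nonempty_localizedModule_quotient_equiv_residueField :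
    Nonempty (LocalizedModule p.primeCompl (R ⧸ p) ≃ₗ[Localization.AtPrime p]
      ResidueField (Localization.AtPrime p)) := by
  have e := IsLocalizedModule.mapEquiv p.primeCompl
    (LocalizedModule.mkLinearMap p.primeCompl (R ⧸ p))
    (Submodule.toLocalizedQuotient' (Localization.AtPrime p) p.primeCompl
      (Algebra.linearMap R (Localization.AtPrime p)) p)
    (Localization.AtPrime p) (LinearEquiv.refl R (R ⧸ p))
  exact ⟨e.trans (Submodule.quotEquivOfEq _ _ (localized'_atPrime_eq_maximalIdeal p))⟩

lemma free_localizedModule_of_smul_mem_smul_top [IsNoetherianRing R] {a : R} (ha : a ∉ p)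
    {C F : Type*} [AddCommGroup C] [Module R C] [AddCommGroup F] [Module R F] [Module.Free R F]
    [Module.Finite R F] {g : F →ₗ[R] C} (hg : Function.Surjective g)
    (h : ∀ z : LinearMap.ker g, (z : F) ∈ p • (⊤ : Submodule R F) →
      a • z ∈ p • (⊤ : Submodule R (LinearMap.ker g))) :
    Module.Free (Localization.AtPrime p) (LocalizedModule p.primeCompl C) := by
  have : Module.Free (Localization.AtPrime p) (LocalizedModule p.primeCompl F) :=
    Module.free_of_isLocalizedModule p.primeCompl (LocalizedModule.mkLinearMap p.primeCompl _)
  have : Module.Finite (Localization.AtPrime p) (LocalizedModule p.primeCompl F) :=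
    Module.Finite.of_isLocalizedModule p.primeCompl (LocalizedModule.mkLinearMap p.primeCompl _)
  have : Module.Finite (Localization.AtPrime p)
      (LocalizedModule p.primeCompl (LinearMap.ker g)) :=
    Module.Finite.of_isLocalizedModule p.primeCompl (LocalizedModule.mkLinearMap p.primeCompl _)
  refine free_of_forall_mem_maximalIdeal_smul_top (LocalizedModule.map_surjective p.primeCompl _ hg)
    (localizedModule_map_ker_subtype_exact p.primeCompl g) fun z hz ↦ ?_
  induction z using LocalizedModule.induction_on with | _ z s
  simp only [LocalizedModule.map_mk, mk_mem_maximalIdeal_smul_top_iff] at hz ⊢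
  obtain ⟨t, ht, hz⟩ := hz
  refine ⟨a * t, fun hat ↦ (Ideal.IsPrime.mem_or_mem' hat).elim ha ht, ?_⟩
  rw [mul_smul]
  exact h (t • z) hz

end LocalFreeness

section ProjectiveDimensionResidueField

lemma projective_iff_hasProjectiveDimensionLE_zero (S : Type u) [CommRing S] (A : Type u)
    [AddCommGroup A] [Module S A] :
    Module.Projective S A ↔ HasProjectiveDimensionLE (ModuleCat.of S A) 0 :=
  (IsProjective.iff_projective A).trans projective_iff_hasProjectiveDimensionLT_one

lemma hasProjectiveDimensionLE_succ_iff_of_exact {S A B C : Type u} [CommRing S] [AddCommGroup A]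
    [AddCommGroup B] [AddCommGroup C] [Module S A] [Module S B] [Module S C]
    [Module.Projective S B] {f : A →ₗ[S] B} {g : B →ₗ[S] C} (hf : Function.Injective f)
    (hg : Function.Surjective g) (hfg : Function.Exact f g) (n : ℕ) :
    HasProjectiveDimensionLE (ModuleCat.of S C) (n + 1) ↔
      HasProjectiveDimensionLE (ModuleCat.of S A) n :=
  (ModuleCat.shortComplex_shortExact
    (ModuleCat.shortComplexOfCompEqZero f g hfg.linearMap_comp_eq_zero) hfg hf
    hg).hasProjectiveDimensionLT_X₃_iff n ((IsProjective.iff_projective B).mp inferInstance)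

lemma IsSyzygy.hasProjectiveDimensionLE_localized_iff {R : Type u} [CommRing R]
    {M K : ModuleCat.{u} R} {i e : ℕ} (hK : IsSyzygy M i K) (W : Submonoid R) :
    HasProjectiveDimensionLE (ModuleCat.of (Localization W) (LocalizedModule W M)) (i + e) ↔
      HasProjectiveDimensionLE (ModuleCat.of (Localization W) (LocalizedModule W K)) e := by
  induction hK generalizing e with
  | zero => rw [zero_add]
  | @ker i L _ k f hf ih =>
    have : Module.Free (Localization W) (LocalizedModule W (Fin k → R)) :=
      Module.free_of_isLocalizedModule W (LocalizedModule.mkLinearMap W _)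
    rw [add_right_comm, add_assoc, ih]
    exact hasProjectiveDimensionLE_succ_iff_of_exact
      (LocalizedModule.map_injective W _ (Submodule.injective_subtype _))
      (LocalizedModule.map_surjective W _ hf) (localizedModule_map_ker_subtype_exact W f) e

lemma AnnihilatesExtOneCM0.hasProjectiveDimensionLE_residueField {R : Type} [CommRing R]
    [IsNoetherianRing R] [IsLocalRing R] {a : R} (ha : AnnihilatesExtOneCM0 a)
    (hCM : IsCMLocalRing R) {d : ℕ} (hd : ringKrullDim R ≤ d) (p : Ideal R) [p.IsPrime]
    (hap : a ∉ p) :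
    HasProjectiveDimensionLE
      (ModuleCat.of (Localization.AtPrime p) (ResidueField (Localization.AtPrime p))) d := by
  have : Module.Finite R (ModuleCat.of R (R ⧸ p)) := inferInstanceAs (Module.Finite R (R ⧸ p))
  obtain ⟨C, hC⟩ := exists_isSyzygy (ModuleCat.of R (R ⧸ p)) d
  have := hC.finite
  obtain ⟨n, g, hg⟩ := Module.Finite.exists_fin' R C
  have := free_localizedModule_of_smul_mem_smul_top p hap hg
    fun _ hz ↦ ha.smul_mem_smul_top hCM hd hC p hg hz
  have := (hC.hasProjectiveDimensionLE_localized_iff p.primeCompl).mpr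
    ((projective_iff_hasProjectiveDimensionLE_zero _ _).mp Module.Projective.of_free)
  obtain ⟨e⟩ := nonempty_localizedModule_quotient_equiv_residueField p
  exact hasProjectiveDimensionLT_of_iso (LinearEquiv.toModuleIso e) (d + 1)

end ProjectiveDimensionResidueField

section DepthZero

variable {S : Type u} [CommRing S]

lemma smul_eq_zero_of_mem_smul_top {I : Ideal S} {s : S} (hs : s ∈ Module.annihilator S I)
    {A : Type*} [AddCommGroup A] [Module S A] {z : A} (hz : z ∈ I • (⊤ : Submodule S A)) :
    s • z = 0 := by
  induction hz using Submodule.smul_induction_on' with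
  | smul r hr y _ =>
    rw [smul_smul, ← smul_eq_mul s r, Submodule.mem_annihilator.mp hs r hr, zero_smul]
  | add x _ y _ hx hy => rw [smul_add, hx, hy, add_zero]

variable [IsLocalRing S]

lemma mem_maximalIdeal_smul_top_of_smul_eq_zero {s : S} (hs : s ≠ 0) {A : Type*} [AddCommGroup A]
    [Module S A] [Module.Free S A] {z : A} (hz : s • z = 0) :
    z ∈ maximalIdeal S • (⊤ : Submodule S A) := by
  let b := Module.Free.chooseBasis S A
  have coord_mem (i) : b.repr z i ∈ maximalIdeal S := fun hu ↦
    hs (hu.mul_left_eq_zero.mp (by simpa using congrArg (fun w ↦ b.repr w i) hz))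
  rw [← b.linearCombination_repr z, Finsupp.linearCombination_apply]
  exact Submodule.sum_mem _ fun i _ ↦ Submodule.smul_mem_smul (coord_mem i) trivial

lemma free_of_hasProjectiveDimensionLE_of_annihilator_ne_bot [IsNoetherianRing S]
    (hS : Module.annihilator S (maximalIdeal S) ≠ ⊥) {A : Type u} [AddCommGroup A] [Module S A]
    [Module.Finite S A] {n : ℕ} (h : HasProjectiveDimensionLE (ModuleCat.of S A) n) :
    Module.Free S A := by
  obtain ⟨s, hs, hs0⟩ := Submodule.exists_mem_ne_zero_of_ne_bot hS
  induction n generalizing A with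
  | zero =>
    have := (projective_iff_hasProjectiveDimensionLE_zero S A).mpr h
    have : Module.Flat S A := Module.Flat.of_projective
    exact Module.free_of_flat_of_isLocalRing
  | succ n ih =>
    obtain ⟨k, g, hg⟩ := Module.Finite.exists_fin' S A
    have := ih ((hasProjectiveDimensionLE_succ_iff_of_exact (Submodule.injective_subtype _) hg
      g.exact_subtype_ker_map n).mp h)
    refine free_of_forall_mem_maximalIdeal_smul_top hg g.exact_subtype_ker_map fun z hz ↦ ?_
    exact mem_maximalIdeal_smul_top_of_smul_eq_zero hs0
      (Subtype.ext (smul_eq_zero_of_mem_smul_top hs hz))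

lemma maximalIdeal_eq_bot_of_free_residueField [Module.Free S (ResidueField S)] :
    maximalIdeal S = ⊥ := by
  have : FaithfulSMul S (ResidueField S) := inferInstance
  refine eq_bot_iff.mpr fun x hx ↦ this.eq_of_smul_eq_smul fun y ↦ ?_
  rw [zero_smul, Algebra.smul_def, ResidueField.algebraMap_eq, (residue_eq_zero_iff x).mpr hx,
    zero_mul]

lemma isRegularLocalRing_of_maximalIdeal_eq_bot [IsNoetherianRing S] (h : maximalIdeal S = ⊥) :
    IsRegularLocalRing S := by
  rw [isRegularLocalRing_iff, ringKrullDim_eq_zero_of_isField (isField_iff_maximalIdeal_eq.mpr h),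
    h, Submodule.spanFinrank_bot, Nat.cast_zero]

end DepthZero

section RegularElement

variable {S : Type u} [CommRing S]

lemma exists_mem_maximalIdeal_notMem_sq_mem_nonZeroDivisors [IsLocalRing S] [IsNoetherianRing S]
    (h : Module.annihilator S (maximalIdeal S) = ⊥) :
    ∃ x ∈ maximalIdeal S, x ∉ maximalIdeal S ^ 2 ∧ x ∈ nonZeroDivisors S := by
  by_contra! hc
  have hfin := associatedPrimes.finite S S
  have hsub : (maximalIdeal S : Set S) ⊆ (maximalIdeal S ^ 2 : Ideal S) ∪
      (maximalIdeal S ^ 2 : Ideal S) ∪ ⋃ P ∈ (hfin.toFinset : Set (Ideal S)), (P : Set S) := by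
    rw [Set.union_self, hfin.coe_toFinset, biUnion_associatedPrimes_eq_compl_nonZeroDivisors]
    exact fun x hx ↦ or_iff_not_imp_left.mpr (hc x hx)
  have not_le_sq : ¬ maximalIdeal S ≤ maximalIdeal S ^ 2 := fun hle ↦ by
    have hm : maximalIdeal S = ⊥ :=
      Submodule.eq_bot_of_le_smul_of_le_jacobson_bot (maximalIdeal S) _
        (IsNoetherian.noetherian _) (by rwa [smul_eq_mul, ← pow_two]) (maximalIdeal_le_jacobson _)
    exact top_ne_bot (Submodule.annihilator_bot.symm.trans (hm ▸ h))
  obtain hle | hle | ⟨P, hP, hle⟩ := (Ideal.subset_union_prime' (f := fun P ↦ P)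
    fun P hP ↦ (hfin.mem_toFinset.mp hP).1).mp hsub
  · exact not_le_sq hle
  · exact not_le_sq hle
  · refine (Ideal.bot_lt_annihilator_of_disjoint_nonZeroDivisors ?_).ne' h
    rw [← Set.subset_compl_iff_disjoint_right,
      ← biUnion_associatedPrimes_eq_compl_nonZeroDivisors]
    exact fun x hx ↦ Set.mem_biUnion (hfin.mem_toFinset.mp hP) (hle hx)

lemma lTensor_quotient_ker_subtype_injective {A B : Type*} [AddCommGroup A] [AddCommGroup B]
    [Module S A] [Module S B] {x : S} (hA : IsSMulRegular A x) (g : B →ₗ[S] A) :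
    Function.Injective ((LinearMap.ker g).subtype.lTensor (S ⧸ Ideal.span {x})) := by
  refine lTensor_quotient_injective fun z hz ↦ ?_
  rw [Submodule.ideal_span_singleton_smul] at hz ⊢
  obtain ⟨y, -, hy : x • y = z⟩ := hz
  have hgy : g y = 0 := hA.right_eq_zero_of_smul (by rw [← map_smul, hy]; exact z.2)
  exact ⟨⟨y, hgy⟩, trivial, Subtype.ext hy⟩

open TensorProduct

lemma hasProjectiveDimensionLE_succ_quotient_tensor_iff {A B : Type u} [AddCommGroup A]
    [AddCommGroup B] [Module S A] [Module S B] [Module.Projective S B] {x : S}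
    (hA : IsSMulRegular A x) {g : B →ₗ[S] A} (hg : Function.Surjective g) (n : ℕ) :
    HasProjectiveDimensionLE
        (ModuleCat.of (S ⧸ Ideal.span {x}) ((S ⧸ Ideal.span {x}) ⊗[S] A)) (n + 1) ↔
      HasProjectiveDimensionLE
        (ModuleCat.of (S ⧸ Ideal.span {x}) ((S ⧸ Ideal.span {x}) ⊗[S] LinearMap.ker g)) n :=
  hasProjectiveDimensionLE_succ_iff_of_exact (f := (LinearMap.ker g).subtype.baseChange _)
    (g := g.baseChange _) (lTensor_quotient_ker_subtype_injective hA g)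
    (LinearMap.lTensor_surjective _ hg) (lTensor_exact _ g.exact_subtype_ker_map hg) n

lemma hasProjectiveDimensionLE_quotient_tensor {x : S} (hx : x ∈ nonZeroDivisors S) {A : Type u}
    [AddCommGroup A] [Module S A] (hA : IsSMulRegular A x) {n : ℕ}
    (h : HasProjectiveDimensionLE (ModuleCat.of S A) n) :
    HasProjectiveDimensionLE
      (ModuleCat.of (S ⧸ Ideal.span {x}) ((S ⧸ Ideal.span {x}) ⊗[S] A)) n := by
  induction n generalizing A with
  | zero =>
    have := (projective_iff_hasProjectiveDimensionLE_zero S A).mpr h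
    exact (projective_iff_hasProjectiveDimensionLE_zero _ _).mp inferInstance
  | succ n ih =>
    let g : (A →₀ S) →ₗ[S] A := Finsupp.linearCombination S id
    have hg : Function.Surjective g := Finsupp.linearCombination_id_surjective S A
    have hker : IsSMulRegular (LinearMap.ker g) x :=
      (Module.Flat.isSMulRegular_of_nonZeroDivisors hx).submodule _ _
    have := ih hker ((hasProjectiveDimensionLE_succ_iff_of_exact (Submodule.injective_subtype _) hg
      g.exact_subtype_ker_map n).mp h)
    exact (hasProjectiveDimensionLE_succ_quotient_tensor_iff hA hg n).mpr this

end RegularElement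

section RegularQuotient

open TensorProduct

variable {S : Type u} [CommRing S]

lemma one_tmul_smul_eq_zero {I : Ideal S} {x y : S} (hx : x ∈ I) (hy : y ∈ I) :
    (1 : S ⧸ Ideal.span {x}) ⊗ₜ[S] (y • (⟨x, hx⟩ : I)) = 0 := by
  have comm : y • (⟨x, hx⟩ : I) = x • ⟨y, hy⟩ := Subtype.ext (mul_comm _ _)
  rw [one_tmul_eq_zero_iff_mem_smul_top, comm]
  exact Submodule.smul_mem_smul (Ideal.mem_span_singleton_self x) trivial

lemma spanFinrank_le_spanFinrank_map_quotient_add_one {I : Ideal S} (hI : I.FG) {x : S}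
    (hx : x ∈ I) :
    I.spanFinrank ≤ (I.map (Ideal.Quotient.mk (Ideal.span {x}))).spanFinrank + 1 := by
  classical
  let π := Ideal.Quotient.mk (Ideal.span {x})
  have hπ : Function.Surjective π := Ideal.Quotient.mk_surjective
  obtain ⟨s, hcard, hspan⟩ :=
    Submodule.FG.exists_span_finset_card_eq_spanFinrank (Ideal.FG.map hI π)
  obtain ⟨t, ht, rfl⟩ : ∃ t : Finset S, t.card ≤ s.card ∧ t.image π = s :=
    ⟨s.image (Function.surjInv hπ), Finset.card_image_le, by
      simp [Finset.image_image, Function.comp_def, Function.surjInv_eq hπ]⟩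
  have span_insert : Ideal.span (insert x t : Set S) = I := by
    rw [Finset.coe_image, ← Ideal.span, ← Ideal.map_span] at hspan
    have := congrArg (Ideal.comap π) hspan
    rw [Ideal.comap_map_of_surjective' _ hπ, Ideal.comap_map_of_surjective' _ hπ, Ideal.mk_ker,
      sup_eq_left.mpr ((Ideal.span_singleton_le_iff_mem I).mpr hx), sup_comm] at this
    rw [Ideal.span_insert, this]
  calc I.spanFinrank
      = (Ideal.span ((insert x t : Finset S) : Set S)).spanFinrank := by
        rw [Finset.coe_insert, span_insert]
    _ ≤ (insert x t).card := by
        rw [← Set.ncard_coe_finset]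
        exact Submodule.spanFinrank_span_le_ncard_of_finite (insert x t).finite_toSet
    _ ≤ t.card + 1 := Finset.card_insert_le _ _
    _ ≤ _ := by gcongr; exact ht.trans_eq hcard

variable [IsLocalRing S]

lemma exists_residueField_linearMap_one_eq {T : Type*} [AddCommGroup T] [Module S T] {t : T}
    (ht : ∀ y ∈ maximalIdeal S, y • t = 0) : ∃ i : ResidueField S →ₗ[S] T, i 1 = t :=
  ⟨Submodule.liftQ (maximalIdeal S) (LinearMap.toSpanSingleton S T t) ht, one_smul S t⟩

lemma exists_linearMap_maximalIdeal_residueField_eq_one {T : Type*} [CommRing T]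
    [IsLocalRing T] [Algebra S T] [IsLocalHom (algebraMap S T)] {x : S} (hx : x ∈ maximalIdeal S)
    (hx2 : x ∉ maximalIdeal S ^ 2) :
    ∃ φ : maximalIdeal S →ₗ[S] ResidueField T, φ ⟨x, hx⟩ = 1 := by
  have hx0 : (maximalIdeal S).toCotangent ⟨x, hx⟩ ≠ 0 :=
    (Ideal.toCotangent_eq_zero _ _).not.mpr hx2
  obtain ⟨f, hf⟩ :=
    Module.Projective.exists_dual_eq_one (ResidueField S) (V := CotangentSpace S) hx0
  exact ⟨(Algebra.linearMap (ResidueField S) (ResidueField T)).restrictScalars S ∘ₗ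
    f.restrictScalars S ∘ₗ (maximalIdeal S).toCotangent, by simp [hf]⟩

lemma exists_retraction_residueField_quotient_tensor {x : S}
    (hx : x ∈ maximalIdeal S) (hx2 : x ∉ maximalIdeal S ^ 2) [IsLocalRing (S ⧸ Ideal.span {x})] :
    ∃ (i : ResidueField (S ⧸ Ideal.span {x}) →ₗ[S ⧸ Ideal.span {x}]
        (S ⧸ Ideal.span {x}) ⊗[S] maximalIdeal S)
      (r : (S ⧸ Ideal.span {x}) ⊗[S] maximalIdeal S →ₗ[S ⧸ Ideal.span {x}]
        ResidueField (S ⧸ Ideal.span {x})), r ∘ₗ i = LinearMap.id := by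
  have : IsLocalHom (algebraMap S (S ⧸ Ideal.span {x})) :=
    Function.Surjective.isLocalHom _ Ideal.Quotient.mk_surjective
  obtain ⟨i, hi⟩ : ∃ i : ResidueField (S ⧸ Ideal.span {x}) →ₗ[S ⧸ Ideal.span {x}]
      (S ⧸ Ideal.span {x}) ⊗[S] maximalIdeal S, i 1 = 1 ⊗ₜ ⟨x, hx⟩ := by
    refine exists_residueField_linearMap_one_eq fun y hy ↦ ?_
    obtain ⟨y, rfl⟩ := Ideal.Quotient.mk_surjective y
    have hy' : y ∈ maximalIdeal S := fun hu ↦ hy (hu.map _)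
    rw [← one_tmul_smul_eq_zero hx hy', tmul_smul]
    exact algebraMap_smul (S ⧸ Ideal.span {x}) y _
  obtain ⟨φ, hφ⟩ := exists_linearMap_maximalIdeal_residueField_eq_one
    (T := S ⧸ Ideal.span {x}) hx hx2
  refine ⟨i, φ.liftBaseChange _, LinearMap.ext fun y ↦ ?_⟩
  obtain ⟨y, rfl⟩ := residue_surjective y
  have residue_eq_smul : residue (S ⧸ Ideal.span {x}) y = y • 1 := by
    rw [Algebra.smul_def, mul_one]
    rfl
  rw [residue_eq_smul, map_smul, LinearMap.comp_apply, hi, LinearMap.liftBaseChange_tmul, hφ,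
    one_smul, LinearMap.id_apply]

lemma hasProjectiveDimensionLE_residueField_quotient {x : S}
    (hx : x ∈ maximalIdeal S) (hx2 : x ∉ maximalIdeal S ^ 2) (hreg : x ∈ nonZeroDivisors S)
    [IsLocalRing (S ⧸ Ideal.span {x})] {n : ℕ}
    (h : HasProjectiveDimensionLE (ModuleCat.of S (ResidueField S)) n) :
    HasProjectiveDimensionLE
      (ModuleCat.of (S ⧸ Ideal.span {x}) (ResidueField (S ⧸ Ideal.span {x}))) n := by
  have hm : IsSMulRegular (maximalIdeal S) x :=
    (Module.Flat.isSMulRegular_of_nonZeroDivisors hreg).submodule _ _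
  have pd_maximalIdeal : HasProjectiveDimensionLE (ModuleCat.of S (maximalIdeal S)) n := by
    have : HasProjectiveDimensionLE (ModuleCat.of S (ResidueField S)) (n + 1) :=
      hasProjectiveDimensionLT_of_ge _ (n + 1) (n + 2) (by lia)
    exact (hasProjectiveDimensionLE_succ_iff_of_exact (Submodule.injective_subtype _)
      (Submodule.mkQ_surjective _) (LinearMap.exact_subtype_mkQ (maximalIdeal S)) n).mp this
  have := hasProjectiveDimensionLE_quotient_tensor hreg hm pd_maximalIdeal
  obtain ⟨i, r, hri⟩ := exists_retraction_residueField_quotient_tensor hx hx2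
  have retract : Retract (ModuleCat.of (S ⧸ Ideal.span {x}) (ResidueField (S ⧸ Ideal.span {x})))
      (ModuleCat.of (S ⧸ Ideal.span {x}) ((S ⧸ Ideal.span {x}) ⊗[S] maximalIdeal S)) :=
    ⟨ModuleCat.ofHom i, ModuleCat.ofHom r, congrArg ModuleCat.ofHom hri⟩
  exact retract.hasProjectiveDimensionLT (n + 1)

lemma isRegularLocalRing_of_quotient_span_singleton [IsNoetherianRing S] {x : S}
    (hx : x ∈ maximalIdeal S) (hreg : x ∈ nonZeroDivisors S)
    [h : IsRegularLocalRing (S ⧸ Ideal.span {x})] : IsRegularLocalRing S := by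
  refine IsRegularLocalRing.of_spanFinrank_maximalIdeal_le S ?_
  rw [← ringKrullDim_quotient_span_singleton_succ_eq_ringKrullDim_of_mem_nonZeroDivisors hreg hx,
    ← h.spanFinrank_maximalIdeal,
    ← map_maximalIdeal_of_surjective _ (Ideal.Quotient.mk_surjective (I := Ideal.span {x}))]
  exact_mod_cast spanFinrank_le_spanFinrank_map_quotient_add_one (IsNoetherian.noetherian _) hx

end RegularQuotient

section Serre

lemma isRegularLocalRing_of_hasProjectiveDimensionLE_residueField {S : Type u} [CommRing S]
    [IsNoetherianRing S] [IsLocalRing S] {n : ℕ}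
    (h : HasProjectiveDimensionLE (ModuleCat.of S (ResidueField S)) n) :
    IsRegularLocalRing S := by
  obtain ⟨d, hd⟩ := exists_ringKrullDim_eq_natCast S
  induction d using Nat.strong_induction_on generalizing S with
  | _ d ih =>
  by_cases hS : Module.annihilator S (maximalIdeal S) = ⊥
  · obtain ⟨x, hxm, hx2, hreg⟩ := exists_mem_maximalIdeal_notMem_sq_mem_nonZeroDivisors hS
    have : Nontrivial (S ⧸ Ideal.span {x}) := Ideal.Quotient.nontrivial_iff.mpr fun htop ↦
      hxm (Ideal.span_singleton_eq_top.mp htop)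
    have : IsLocalRing (S ⧸ Ideal.span {x}) :=
      IsLocalRing.of_surjective' (Ideal.Quotient.mk _) Ideal.Quotient.mk_surjective
    obtain ⟨e, he⟩ := exists_ringKrullDim_eq_natCast (S ⧸ Ideal.span {x})
    have he_lt : e < d := by
      have :=
        ringKrullDim_quotient_span_singleton_succ_eq_ringKrullDim_of_mem_nonZeroDivisors hreg hxm
      rw [he, hd] at this
      exact (Nat.lt_succ_self e).trans_eq (by exact_mod_cast this)
    have := ih e he_lt (hasProjectiveDimensionLE_residueField_quotient hxm hx2 hreg h) he
    exact isRegularLocalRing_of_quotient_span_singleton hxm hreg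
  · have := free_of_hasProjectiveDimensionLE_of_annihilator_ne_bot hS h
    exact isRegularLocalRing_of_maximalIdeal_eq_bot maximalIdeal_eq_bot_of_free_residueField

lemma isRegularLocal_of_isRegularLocalRing {S : Type} [CommRing S] [IsRegularLocalRing S] :
    IsRegularLocal S := by
  obtain ⟨s, hcard, hspan⟩ := Submodule.FG.exists_span_finset_card_eq_spanFinrank
    (IsNoetherian.noetherian (maximalIdeal S))
  exact ⟨inferInstance, s, hspan, hcard ▸ IsRegularLocalRing.spanFinrank_maximalIdeal⟩

end Serre

theorem stmt8_general (R : Type) [CommRing R] [IsNoetherianRing R] [IsLocalRing R]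
    (hCM : IsCMLocalRing R) :
    singularLocus R ⊆ PrimeSpectrum.zeroLocus
      ((⨅ (K : ModuleCat.{0} R) (_ : MemCM0 R K) (L : ModuleCat.{0} R) (_ : MemCM0 R L),
          Module.annihilator R (ExtMod R 1 K L) : Ideal R) : Set R) := by
  intro p hp a ha
  by_contra hap
  have ha_ext : AnnihilatesExtOneCM0 a := fun K L hK hL ↦ by
    obtain ⟨e⟩ := nonempty_extMod_linearEquiv_ext L K 1
    simp only [SetLike.mem_coe, Submodule.mem_iInf] at ha
    exact e.annihilator_eq ▸ ha K hK L hL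
  obtain ⟨d, hd⟩ := exists_ringKrullDim_eq_natCast R
  have := isRegularLocalRing_of_hasProjectiveDimensionLE_residueField
    (ha_ext.hasProjectiveDimensionLE_residueField hCM hd.le p.asIdeal hap)
  exact hp isRegularLocal_of_isRegularLocalRing

/-- Let `R` be a Cohen-Macaulay noetherian local ring. Then the singular
locus of `R` is contained in `V(⋂_{i>0, K,L ∈ CM₀(R)} Ann_R Ext^i(K,L))`. -/
theorem stmt8 (R : Type) [CommRing R] [IsNoetherianRing R] [IsLocalRing R]
    (hCM : IsCMLocalRing R) :
    singularLocus R ⊆ PrimeSpectrum.zeroLocus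
      ((⨅ (i : ℕ) (_ : 0 < i) (K : ModuleCat.{0} R) (_ : MemCM0 R K)
          (L : ModuleCat.{0} R) (_ : MemCM0 R L),
          Module.annihilator R (ExtMod R i K L) : Ideal R) : Set R) :=
  (stmt8_general R hCM).trans <| PrimeSpectrum.zeroLocus_anti_mono <|
    SetLike.coe_subset_coe.mpr (iInf₂_le 1 one_pos)

end
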